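/- Let G be the universal grading group of the fusion category Rep(H*). For any two subgroups M and N of G, the map H(M)·C·H(N) ↦ M·deg(C)·N is a well-defined bijection from the set of double cosets H(M)\H/H(N) (of subcoalgebras of H with respect to the Hopf subalgebras H(M) and H(N)) onto the set of group double cosets M\G/N. -/

import Mathlib

open TensorProduct

namespace MackeyPaper

noncomputable section

universe v

variable (k : Type) [Field k] [CharZero k] [IsAlgClosed k]
variable (H : Type) [Ring H] [HopfAlgebra k H]

/-- A subcoalgebra of `H`: a `k`-subspace `C` with `Δ(C) ⊆ C ⊗ C`. -/
def IsSubcoalgebra (C : Submodule k H) : Prop :=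
  ∀ c ∈ C, Coalgebra.comul (R := k) c ∈
    LinearMap.range (TensorProduct.map C.subtype C.subtype)

/-- A simple (nonzero, minimal) subcoalgebra of `H`. -/
def IsSimpleSubcoalgebra (C : Submodule k H) : Prop :=
  IsSubcoalgebra k H C ∧ C ≠ ⊥ ∧
    ∀ D : Submodule k H, D ≤ C → IsSubcoalgebra k H D → D ≠ ⊥ → D = C

/-- A Hopf subalgebra of `H`: a subalgebra which is a subcoalgebra and is
stable under the antipode. -/
def IsHopfSubalgebra (K : Subalgebra k H) : Prop :=
  IsSubcoalgebra k H K.toSubmodule ∧ ∀ x ∈ K, HopfAlgebra.antipode (R := k) x ∈ K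

/-- `Λ` is the (two-sided) idempotent integral of the Hopf subalgebra `K`,
i.e. the integral normalized by `ε(Λ) = 1`. -/
def IsIdempotentIntegral (K : Subalgebra k H) (Λ : H) : Prop :=
  Λ ∈ K ∧ Coalgebra.counit (R := k) Λ = 1 ∧
    ∀ x ∈ K, x * Λ = Coalgebra.counit (R := k) x • Λ ∧
      Λ * x = Coalgebra.counit (R := k) x • Λ

/-- A cocommutative element of `H`; the cocommutative elements of `H` form
the character ring `C(H^*)`. -/
def IsCocomm (x : H) : Prop :=
  (TensorProduct.comm k H H) (Coalgebra.comul (R := k) x) = Coalgebra.comul (R := k) x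

/-- The character ring `C(H^*)`, i.e. the space of cocommutative elements of `H`,
as a `k`-subspace of `H`. -/
def charRing : Submodule k H :=
  LinearMap.ker ((TensorProduct.comm k H H).toLinearMap ∘ₗ Coalgebra.comul (R := k)
      - Coalgebra.comul (R := k))

/-- `d` is the irreducible character (of `H^*`) associated to the simple
subcoalgebra `C`: the unique cocommutative element of `C` whose counit is the
positive square root of `dim_k C`. -/
def IsCharacterOf (d : H) (C : Submodule k H) : Prop :=
  d ∈ C ∧ IsCocomm k H d ∧
    Coalgebra.counit (R := k) d = ((Nat.sqrt (Module.finrank k ↥C) : ℕ) : k)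

/-- The right coset `CK` of a subcoalgebra `C`, i.e. the subspace `C·K`. -/
def CKsub (K : Subalgebra k H) (C : Submodule k H) : Submodule k H :=
  C * K.toSubmodule

/-- The conjugate Hopf subalgebra `ᶜK` of `K` by a simple subcoalgebra `C`
(with associated irreducible character `c`): the span of all simple
subcoalgebras of `H` whose irreducible character `d` satisfies
`d·c·Λ_K = ε(d)·c·Λ_K`.  (The condition is stated for all cocommutative
elements of `C` resp. `D`; this is equivalent, since the cocommutative
elements of a simple subcoalgebra are exactly the scalar multiples of its
irreducible character.) -/
def conjK (K : Subalgebra k H) (Λ : H) (C : Submodule k H) : Submodule k H :=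
  sSup {D : Submodule k H | IsSimpleSubcoalgebra k H D ∧
    ∀ d ∈ D, IsCocomm k H d → ∀ c ∈ C, IsCocomm k H c →
      d * (c * Λ) = Coalgebra.counit (R := k) d • (c * Λ)}

/-- A complete irredundant system of representatives (by simple subcoalgebras)
of the double cosets `L\H/K`.  (Taking `L = ⊥` gives a system of
representatives of the right cosets `H/K`.) -/
def IsDoubleCosetReps (L K : Subalgebra k H) {ι : Type} (rep : ι → Submodule k H) : Prop :=
  (∀ i, IsSimpleSubcoalgebra k H (rep i)) ∧
  (∀ i j, L.toSubmodule * rep i * K.toSubmodule = L.toSubmodule * rep j * K.toSubmodule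
      → i = j) ∧
  (∀ C : Submodule k H, IsSimpleSubcoalgebra k H C →
      ∃ i, C ≤ L.toSubmodule * rep i * K.toSubmodule)

section Ind

variable (K : Subalgebra k H) (M : Type v) [AddCommGroup M] [Module k M]
  [Module ↥K M] [IsScalarTower k ↥K M]

/-- The relations defining the induced module `H ⊗_K M` as a quotient of
`H ⊗_k M`: the `H`-submodule generated by the elements `a ⊗ m - 1 ⊗ a·m`
for `a ∈ K` (equivalently, spanned by all `h·a ⊗ m - h ⊗ a·m`). -/
def indRel : Submodule H (H ⊗[k] M) :=
  Submodule.span H {z | ∃ (a : ↥K) (m : M),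
    z = (a : H) ⊗ₜ[k] m - (1 : H) ⊗ₜ[k] (a • m)}

/-- The induced module `M↑_K^H = H ⊗_K M`, a left `H`-module. -/
abbrev Ind := (H ⊗[k] M) ⧸ indRel k H K M

variable (C : Submodule k H)

/-- The underlying space `CK ⊗_k M` of which the conjugate module `ᶜM` is a
quotient. -/
def CKM : Type _ := ↥(CKsub k H K C) ⊗[k] M

instance : AddCommGroup (CKM k H K M C) :=
  inferInstanceAs (AddCommGroup (↥(CKsub k H K C) ⊗[k] M))

instance : Module k (CKM k H K M C) :=
  inferInstanceAs (Module k (↥(CKsub k H K C) ⊗[k] M))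

/-- The pure tensor `x ⊗ m` as an element of `CK ⊗_k M`. -/
def ckmk (x : ↥(CKsub k H K C)) (m : M) : CKM k H K M C := x ⊗ₜ[k] m

/-- The relations defining the conjugate module `ᶜM = CK ⊗_K M` as a quotient
of `CK ⊗_k M`: `x·a ⊗ m - x ⊗ a·m` for `a ∈ K`. -/
def conjRel : Submodule k (CKM k H K M C) :=
  Submodule.span k {z | ∃ (x : ↥(CKsub k H K C)) (a : ↥K) (m : M)
    (hxa : (x : H) * (a : H) ∈ CKsub k H K C),
    z = ckmk k H K M C ⟨(x : H) * (a : H), hxa⟩ m - ckmk k H K M C x (a • m)}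

/-- The conjugate module `ᶜM := CK ⊗_K M`. -/
abbrev ConjM := CKM k H K M C ⧸ conjRel k H K M C

/-- The canonical copy of the conjugate module `ᶜM = CK ⊗_K M` inside
`H ⊗_K M` (the image of `CK ⊗_K M` under multiplication; this is indeed a
copy of `ᶜM` since `H` is a free right `K`-module and `CK` is one of the
coset summands). -/
def conjMsub : Submodule k (Ind k H K M) :=
  Submodule.span k {z | ∃ (x : H) (_ : x ∈ CKsub k H K C) (m : M),
    z = Submodule.Quotient.mk (x ⊗ₜ[k] m)}

end Ind

section Comp

variable (L K : Subalgebra k H) (Λ : H) (C : Submodule k H)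
variable (M : Type v) [AddCommGroup M] [Module k M] [Module ↥K M] [IsScalarTower k ↥K M]

/-- The underlying space `L ⊗_k (CK ⊗_k M)`. -/
def LCM : Type _ := ↥L ⊗[k] CKM k H K M C

instance : AddCommGroup (LCM k H L K C M) :=
  inferInstanceAs (AddCommGroup (↥L ⊗[k] CKM k H K M C))

instance : Module k (LCM k H L K C M) :=
  inferInstanceAs (Module k (↥L ⊗[k] CKM k H K M C))

/-- The pure tensor `l ⊗ w` as an element of `L ⊗_k (CK ⊗_k M)`. -/
def lcmk (l : ↥L) (w : CKM k H K M C) : LCM k H L K C M := l ⊗ₜ[k] w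

/-- The relations defining `L ⊗_{L ∩ ᶜK} ᶜM` as a quotient of
`L ⊗_k (CK ⊗_k M)`: the balancedness relations over `L ∩ ᶜK` (first set),
together with (the image of) the relations defining `ᶜM = CK ⊗_K M`
(second set). -/
def compRel : Submodule k (LCM k H L K C M) :=
  Submodule.span k
    ({z | ∃ (l : ↥L) (a : H) (haL : a ∈ L) (_ : a ∈ conjK k H K Λ C)
        (x : ↥(CKsub k H K C)) (m : M) (hax : a * (x : H) ∈ CKsub k H K C),
        z = lcmk k H L K C M ⟨(l : H) * a, mul_mem l.2 haL⟩ (ckmk k H K M C x m)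
          - lcmk k H L K C M l (ckmk k H K M C ⟨a * (x : H), hax⟩ m)} ∪
     {z | ∃ (l : ↥L) (x : ↥(CKsub k H K C)) (a : ↥K) (m : M)
        (hxa : (x : H) * (a : H) ∈ CKsub k H K C),
        z = lcmk k H L K C M l (ckmk k H K M C ⟨(x : H) * (a : H), hxa⟩ m)
          - lcmk k H L K C M l (ckmk k H K M C x (a • m))})

/-- The module `L ⊗_{L ∩ ᶜK} ᶜM` (a left `L`-module via multiplication on the
first tensor factor). -/
abbrev Comp := LCM k H L K C M ⧸ compRel k H L K Λ C M

end Comp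

open DirectSum

section Mackey

variable (L K : Subalgebra k H) (Λ : H)

/-- The Mackey isomorphism property for the pair `(L, K)` at the `K`-module
`M`: for any system of double coset representatives, the left-multiplication
map `⊕_C L ⊗_{L ∩ ᶜK} ᶜM → M↑_K^H↓_L^H`, `l ⊗ v ↦ l·v`, is an isomorphism of
`L`-modules.  (A `k`-linear map satisfying the displayed formula on the
spanning elements is automatically `L`-equivariant for the evident
`L`-actions, so this property is stated for `k`-linear maps.) -/
def MackeyAt (M : Type v) [AddCommGroup M] [Module k M] [Module ↥K M]
    [IsScalarTower k ↥K M] [Module.Finite k M] : Prop :=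
  ∀ (ι : Type) [DecidableEq ι] (rep : ι → Submodule k H),
    IsDoubleCosetReps k H L K rep →
    ∃ π : (⨁ i : ι, Comp k H L K Λ (rep i) M) →ₗ[k] Ind k H K M,
      Function.Bijective π ∧
      ∀ (i : ι) (l : ↥L) (x : ↥(CKsub k H K (rep i))) (m : M),
        π (DirectSum.of (fun i => Comp k H L K Λ (rep i) M) i
            (Submodule.Quotient.mk (lcmk k H L K (rep i) M l (ckmk k H K M (rep i) x m)))) =
          Submodule.Quotient.mk (((l : H) * (x : H)) ⊗ₜ[k] m)

/-- `(L, K)` is a Mackey pair of Hopf subalgebras of `H` (here `Λ` is the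
idempotent integral of `K`): for every finite-dimensional `K`-module `M` the
left-multiplication homomorphism `π_M` is an isomorphism. -/
def IsMackeyPair : Prop :=
  ∀ (M : Type v) [AddCommGroup M] [Module k M] [Module ↥K M]
    [IsScalarTower k ↥K M] [Module.Finite k M], MackeyAt k H L K Λ M

end Mackey


section Statements

variable [FiniteDimensional k H] [IsSemisimpleRing H]

/-- A `G`-grading on the fusion category `Rep(H^*)`, described via the
canonical bijection between simple objects of `Rep(H^*)` and simple
subcoalgebras of `H`: a degree function on simple subcoalgebras such that
every simple subcoalgebra of a product `C·D` (i.e. every simple constituent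
of the corresponding tensor product of comodules) has degree
`deg C · deg D`. -/
def IsGrading (G : Type) [Group G] (deg : Submodule k H → G) : Prop :=
  ∀ C D E : Submodule k H, IsSimpleSubcoalgebra k H C →
    IsSimpleSubcoalgebra k H D → IsSimpleSubcoalgebra k H E →
    E ≤ C * D → deg E = deg C * deg D

/-- The universal grading of `Rep(H^*)`: every grading factors uniquely
through it. -/
def IsUniversalGrading (G : Type) [Group G] (deg : Submodule k H → G) : Prop :=
  IsGrading k H G deg ∧
    ∀ (G' : Type) [Group G'] (deg' : Submodule k H → G'), IsGrading k H G' deg' →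
      ∃! f : G →* G', ∀ C : Submodule k H, IsSimpleSubcoalgebra k H C →
        deg' C = f (deg C)

/-- For a subset `S ⊆ G`, the subcoalgebra `H(S)` of `H` spanned by the simple
subcoalgebras whose degree lies in `S`. -/
def Hgr (G : Type) [Group G] (deg : Submodule k H → G) (S : Set G) : Submodule k H :=
  sSup {C : Submodule k H | IsSimpleSubcoalgebra k H C ∧ deg C ∈ S}

end Statements

end

end MackeyPaper

section PrimeArtinian

/-- In an Artinian prime ring every nonzero two-sided ideal is the whole ring. -/
theorem IsArtinianRing.eq_top_of_isTwoSided_of_prime {R : Type*} [Ring R] [IsArtinianRing R]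
    (hprime : ∀ a b : R, (∀ r, a * r * b = 0) → a = 0 ∨ b = 0)
    (J : Ideal R) [J.IsTwoSided] (hJ : J ≠ ⊥) : J = ⊤ := by
  have hsq : ∀ I : Ideal R, I.IsTwoSided → I * I = ⊥ → I = ⊥ := by
    intro I hI hII
    rw [eq_bot_iff]
    intro a ha
    have : a = 0 ∨ a = 0 := hprime a a fun r => by
      have : a * r * a ∈ I * I := Ideal.mul_mem_mul (I.mul_mem_right r ha) ha
      simpa [hII] using this
    simpa using this
  have hjac : Ring.jacobson R = ⊥ := by
    obtain ⟨n, hn⟩ := IsSemiprimaryRing.isNilpotent (R := R)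
    have key : ∀ m : ℕ, Ring.jacobson R ^ (m + 1) = ⊥ → Ring.jacobson R = ⊥ := by
      intro m
      induction m with
      | zero => intro h; simpa [Submodule.pow_one] using h
      | succ m ih =>
        intro h
        refine ih (hsq _ inferInstance ?_)
        rw [← Ideal.IsTwoSided.pow_add, show m + 1 + (m + 1) = (m + 1 + 1) + m by ring,
          Ideal.IsTwoSided.pow_add, h, Ideal.bot_mul]
    refine key n ?_
    rw [Submodule.pow_succ, hn, Ideal.zero_eq_bot, Ideal.bot_mul]
  have : IsSemisimpleRing R := IsArtinianRing.isSemisimpleRing_iff_jacobson.mpr hjac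
  obtain ⟨L, hL⟩ := exists_isCompl J
  obtain ⟨a, ha, ha0⟩ := Submodule.exists_mem_ne_zero_of_ne_bot hJ
  have hLbot : L = ⊥ := by
    rw [eq_bot_iff]
    intro l hl
    have := hprime a l fun r => by
      have h : a * r * l ∈ J ⊓ L :=
        ⟨J.mul_mem_right l (J.mul_mem_right r ha), L.mul_mem_left _ hl⟩
      rw [hL.inf_eq_bot] at h
      simpa using h
    simpa [ha0] using this
  simpa [hLbot] using hL.sup_eq_top

/-- If a two-sided ideal `I` of an Artinian ring is not maximal among proper two-sided ideals,
then it is not prime. -/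
theorem IsArtinianRing.exists_mul_mul_mem_of_lt_of_ne_top {R : Type*} [Ring R] [IsArtinianRing R]
    (I J : Ideal R) [I.IsTwoSided] [J.IsTwoSided] (hIJ : I < J) (hJ : J ≠ ⊤) :
    ∃ a b : R, a ∉ I ∧ b ∉ I ∧ ∀ r, a * r * b ∈ I := by
  by_contra! hcon
  have hart : IsArtinianRing (R ⧸ I) := 
    Ideal.Quotient.mk_surjective.isArtinianRing (f := Ideal.Quotient.mk I)
  have hprime : ∀ a b : R ⧸ I, (∀ r, a * r * b = 0) → a = 0 ∨ b = 0 := by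
    intro a b h
    obtain ⟨a, rfl⟩ := Ideal.Quotient.mk_surjective a
    obtain ⟨b, rfl⟩ := Ideal.Quotient.mk_surjective b
    simp only [Ideal.Quotient.eq_zero_iff_mem]
    by_contra! hab
    obtain ⟨r, hr⟩ := hcon a b hab.1 hab.2
    refine hr (Ideal.Quotient.eq_zero_iff_mem.mp ?_)
    simpa using h (Ideal.Quotient.mk I r)
  let K : Ideal (R ⧸ I) := J.map (Ideal.Quotient.mk I)
  have hmem : ∀ x : R, Ideal.Quotient.mk I x ∈ K → x ∈ J := by
    intro x hx
    obtain ⟨y, hy, hxy⟩ :=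
      (Ideal.mem_map_iff_of_surjective _ Ideal.Quotient.mk_surjective).mp hx
    have := hIJ.le (Ideal.Quotient.eq.mp hxy)
    simpa using J.sub_mem hy this
  have hK : K.IsTwoSided := ⟨fun {x} y hx => by
    obtain ⟨x, rfl⟩ := Ideal.Quotient.mk_surjective x
    obtain ⟨y, rfl⟩ := Ideal.Quotient.mk_surjective y
    rw [← map_mul]
    exact Ideal.mem_map_of_mem _ (J.mul_mem_right y (hmem x hx))⟩
  have hKtop : K = ⊤ := by
    refine IsArtinianRing.eq_top_of_isTwoSided_of_prime hprime K ?_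
    intro hbot
    obtain ⟨x, hxJ, hxI⟩ := SetLike.exists_of_lt hIJ
    have : Ideal.Quotient.mk I x ∈ K := Ideal.mem_map_of_mem _ hxJ
    rw [hbot, Submodule.mem_bot, Ideal.Quotient.eq_zero_iff_mem] at this
    exact hxI this
  exact hJ ((Ideal.eq_top_iff_one J).mpr (hmem 1 (hKtop ▸ Submodule.mem_top)))

end PrimeArtinian

namespace MackeyPaper

section Subcoalgebra

variable {k H : Type} [Field k] [Ring H] [HopfAlgebra k H]

/-- The annihilator of a subspace `A` of `H` in the convolution algebra `H^*`. -/
def convAnn (A : Submodule k H) : Submodule k (WithConv (H →ₗ[k] k)) where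
  carrier := {f | ∀ x ∈ A, f x = 0}
  add_mem' hf hg x hx := by simp [hf x hx, hg x hx]
  zero_mem' x hx := by simp
  smul_mem' c f hf x hx := by simp [hf x hx]

theorem mem_convAnn_iff {A : Submodule k H} {f : WithConv (H →ₗ[k] k)} :
    f ∈ convAnn A ↔ f.ofConv ∈ A.dualAnnihilator := by
  rw [Submodule.mem_dualAnnihilator]; rfl

theorem convAnn_anti {A B : Submodule k H} (h : A ≤ B) : convAnn B ≤ convAnn A :=
  fun _ hf x hx => hf x (h hx)

theorem le_of_convAnn_le {A B : Submodule k H} (h : convAnn A ≤ convAnn B) : B ≤ A := by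
  intro x hx
  by_contra hxA
  obtain ⟨f, hfx, hf⟩ := Submodule.exists_dual_map_eq_bot_of_notMem hxA inferInstance
  refine hfx (h (x := WithConv.toConv f) (fun y hy => ?_) x hx)
  have : f y ∈ A.map f := Submodule.mem_map_of_mem hy
  rw [hf] at this
  simpa using this

theorem mem_convAnn_inf {A B : Submodule k H} [FiniteDimensional k H]
    {f : WithConv (H →ₗ[k] k)} (hf : f ∈ convAnn (A ⊓ B)) :
    f ∈ convAnn A ⊔ convAnn B := by
  rw [mem_convAnn_iff, Subspace.dualAnnihilator_inf_eq] at hf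
  obtain ⟨u, hu, v, hv, huv⟩ := Submodule.mem_sup.mp hf
  refine Submodule.mem_sup.mpr ⟨WithConv.toConv u, mem_convAnn_iff.mpr hu,
    WithConv.toConv v, mem_convAnn_iff.mpr hv, ?_⟩
  ext x
  exact congrArg (fun g => g x) huv

theorem tensor_eq_zero_of_forall_dual [FiniteDimensional k H] (t : H ⊗[k] H)
    (h : ∀ f g : H →ₗ[k] k, LinearMap.mul' k k (TensorProduct.map f g t) = 0) : t = 0 := by
  rw [← Module.forall_dual_apply_eq_zero_iff k t]
  intro φ
  obtain ⟨w, rfl⟩ := (TensorProduct.dualDistribEquiv k H H).surjective φ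
  induction w with
  | zero => simp
  | add a b ha hb => rw [map_add, LinearMap.add_apply, ha, hb, add_zero]
  | tmul f g =>
    rw [← h f g]
    have : (TensorProduct.dualDistribEquiv k H H) (f ⊗ₜ g)
        = (LinearMap.mul' k k).comp (TensorProduct.map f g) := by
      ext x y
      simp [TensorProduct.dualDistribEquiv, TensorProduct.dualDistribEquivOfBasis]
    rw [this]; rfl

theorem isSubcoalgebra_iff_convAnn [FiniteDimensional k H] (A : Submodule k H) :
    IsSubcoalgebra k H A ↔ ∀ f ∈ convAnn A, ∀ g, f * g ∈ convAnn A ∧ g * f ∈ convAnn A := by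
  constructor
  · intro hA f hf g
    constructor <;> intro x hx
    all_goals
      obtain ⟨t, ht⟩ := hA x hx
      rw [LinearMap.convMul_apply, ← ht]
      clear ht
      induction t with
      | zero => simp
      | add a b ha hb => rw [map_add, map_add, map_add, ha, hb, add_zero]
      | tmul a b =>
        have ha : f.ofConv a = 0 := hf a a.2
        have hb : f.ofConv b = 0 := hf b b.2
        simp [ha, hb]
  · intro h x hx
    obtain ⟨p, hp⟩ := A.subtype.exists_leftInverse_of_injective A.ker_subtype
    have hq : ∀ f : H →ₗ[k] k,
        WithConv.toConv (f - f ∘ₗ A.subtype ∘ₗ p) ∈ convAnn A := fun f y hy => by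
      have : p y = ⟨y, hy⟩ := LinearMap.congr_fun hp ⟨y, hy⟩
      change f y - f (p y) = 0
      simp [this]
    have hl : TensorProduct.map (A.subtype ∘ₗ p) LinearMap.id (Coalgebra.comul (R := k) x)
        = Coalgebra.comul (R := k) x := by
      rw [eq_comm, ← sub_eq_zero]
      refine tensor_eq_zero_of_forall_dual _ fun f g => ?_
      have := (h _ (hq f) (WithConv.toConv g)).1 x hx
      rw [LinearMap.convMul_apply] at this
      have hs : TensorProduct.map (f - f ∘ₗ A.subtype ∘ₗ p) g =
          TensorProduct.map f g - TensorProduct.map (f ∘ₗ A.subtype ∘ₗ p) g := by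
        ext; simp [sub_tmul]
      simpa [TensorProduct.map_map, hs] using this
    have hr : TensorProduct.map LinearMap.id (A.subtype ∘ₗ p) (Coalgebra.comul (R := k) x)
        = Coalgebra.comul (R := k) x := by
      rw [eq_comm, ← sub_eq_zero]
      refine tensor_eq_zero_of_forall_dual _ fun f g => ?_
      have := (h _ (hq g) (WithConv.toConv f)).2 x hx
      rw [LinearMap.convMul_apply] at this
      have hs : TensorProduct.map f (g - g ∘ₗ A.subtype ∘ₗ p) =
          TensorProduct.map f g - TensorProduct.map f (g ∘ₗ A.subtype ∘ₗ p) := by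
        ext; simp [tmul_sub]
      simpa [TensorProduct.map_map, hs] using this
    refine ⟨TensorProduct.map p p (Coalgebra.comul (R := k) x), ?_⟩
    nth_rw 2 [← hl]
    nth_rw 2 [← hr]
    simp [TensorProduct.map_map]

theorem IsSubcoalgebra.mul {A B : Submodule k H} (hA : IsSubcoalgebra k H A)
    (hB : IsSubcoalgebra k H B) : IsSubcoalgebra k H (A * B) := by
  have key : ∀ (s : A ⊗[k] A) (t : B ⊗[k] B),
      TensorProduct.map A.subtype A.subtype s * TensorProduct.map B.subtype B.subtype t ∈
        LinearMap.range (TensorProduct.map (A * B).subtype (A * B).subtype) := by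
    intro s t
    induction s with
    | zero => simp
    | add x y hx hy => rw [map_add, add_mul]; exact add_mem hx hy
    | tmul a a' =>
      induction t with
      | zero => simp
      | add x y hx hy => rw [map_add, mul_add]; exact add_mem hx hy
      | tmul b b' =>
        exact ⟨⟨a * b, Submodule.mul_mem_mul a.2 b.2⟩ ⊗ₜ
          ⟨a' * b', Submodule.mul_mem_mul a'.2 b'.2⟩, by simp⟩
  intro x hx
  induction hx using Submodule.mul_induction_on' with
  | mem_mul_mem a ha b hb =>
    obtain ⟨s, hs⟩ := hA a ha
    obtain ⟨t, ht⟩ := hB b hb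
    rw [Bialgebra.comul_mul, ← hs, ← ht]
    exact key s t
  | add x _ y _ hx hy => rw [map_add]; exact add_mem hx hy

theorem isSubcoalgebra_top : IsSubcoalgebra k H (⊤ : Submodule k H) := fun c _ => by
  have hsurj : Function.Surjective (⊤ : Submodule k H).subtype := fun x => ⟨⟨x, trivial⟩, rfl⟩
  exact TensorProduct.map_surjective hsurj hsurj _

theorem isSimpleSubcoalgebra_one : IsSimpleSubcoalgebra k H (1 : Submodule k H) := by
  have : Nontrivial H := ⟨1, 0, fun h => one_ne_zero (α := k) (by
    rw [← Bialgebra.counit_one (R := k) (A := H), h, map_zero])⟩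
  refine ⟨?_, one_ne_zero, fun D hD _ hD0 => le_antisymm hD ?_⟩
  · intro c hc
    obtain ⟨r, rfl⟩ := Submodule.mem_one.mp hc
    refine ⟨r • (⟨1, Submodule.one_le.mp le_rfl⟩ ⊗ₜ ⟨1, Submodule.one_le.mp le_rfl⟩), ?_⟩
    simp [Algebra.algebraMap_eq_smul_one, Algebra.TensorProduct.one_def]
  · obtain ⟨x, hx, hx0⟩ := Submodule.exists_mem_ne_zero_of_ne_bot hD0
    obtain ⟨r, rfl⟩ := Submodule.mem_one.mp (hD hx)
    have hr : r ≠ 0 := by rintro rfl; simp at hx0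
    rw [Submodule.one_le]
    simpa [Algebra.algebraMap_eq_smul_one, smul_smul, hr] using D.smul_mem r⁻¹ hx

theorem convMul_mem_convAnn_mul {A B X Y : Submodule k H} (hB : IsSubcoalgebra k H B)
    (h : ∀ f ∈ convAnn X, ∀ g ∈ convAnn Y, f * g ∈ convAnn A)
    {f g : WithConv (H →ₗ[k] k)} (hf : f ∈ convAnn (X * B)) (hg : g ∈ convAnn (Y * B)) :
    f * g ∈ convAnn (A * B) := by
  intro x hx
  induction hx using Submodule.mul_induction_on' with
  | add x _ y _ hx hy => rw [map_add, hx, hy, add_zero]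
  | mem_mul_mem a ha b hb =>
    obtain ⟨t, ht⟩ := hB b hb
    rw [LinearMap.convMul_apply, Bialgebra.comul_mul, ← ht]
    clear ht
    induction t with
    | zero => simp
    | add x y hx hy => rw [map_add, mul_add, map_add, map_add, hx, hy, add_zero]
    | tmul b₁ b₂ =>
      have hf' : WithConv.toConv (f.ofConv ∘ₗ LinearMap.mulRight k (b₁ : H)) ∈ convAnn X :=
        fun x hx => hf _ (Submodule.mul_mem_mul hx b₁.2)
      have hg' : WithConv.toConv (g.ofConv ∘ₗ LinearMap.mulRight k (b₂ : H)) ∈ convAnn Y :=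
        fun y hy => hg _ (Submodule.mul_mem_mul hy b₂.2)
      have key := h _ hf' _ hg' a ha
      rw [LinearMap.convMul_apply] at key
      rw [← key]
      congr 1
      generalize Coalgebra.comul (R := k) a = s
      induction s with
      | zero => simp
      | add x y hx hy => rw [add_mul, map_add, map_add, hx, hy]
      | tmul x y => simp

variable [FiniteDimensional k H]

theorem IsSubcoalgebra.mul_right_mem_convAnn {A : Submodule k H} (hA : IsSubcoalgebra k H A)
    {f : WithConv (H →ₗ[k] k)} (hf : f ∈ convAnn A) (g : WithConv (H →ₗ[k] k)) :
    f * g ∈ convAnn A :=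
  ((isSubcoalgebra_iff_convAnn A).mp hA f hf g).1

theorem IsSubcoalgebra.mul_left_mem_convAnn {A : Submodule k H} (hA : IsSubcoalgebra k H A)
    {f : WithConv (H →ₗ[k] k)} (hf : f ∈ convAnn A) (g : WithConv (H →ₗ[k] k)) :
    g * f ∈ convAnn A :=
  ((isSubcoalgebra_iff_convAnn A).mp hA f hf g).2

theorem IsSubcoalgebra.one_notMem_convAnn {A : Submodule k H} (hA : IsSubcoalgebra k H A)
    (hA0 : A ≠ ⊥) : 1 ∉ convAnn A := by
  intro h
  refine hA0 (eq_bot_iff.mpr (le_of_convAnn_le fun f _ => ?_))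
  simpa using hA.mul_right_mem_convAnn h f

theorem IsSubcoalgebra.inf {A B : Submodule k H} (hA : IsSubcoalgebra k H A)
    (hB : IsSubcoalgebra k H B) : IsSubcoalgebra k H (A ⊓ B) := by
  rw [isSubcoalgebra_iff_convAnn]
  intro f hf g
  obtain ⟨u, hu, v, hv, rfl⟩ := Submodule.mem_sup.mp (mem_convAnn_inf hf)
  rw [add_mul, mul_add]
  exact ⟨add_mem (convAnn_anti inf_le_left (hA.mul_right_mem_convAnn hu g))
      (convAnn_anti inf_le_right (hB.mul_right_mem_convAnn hv g)),
    add_mem (convAnn_anti inf_le_left (hA.mul_left_mem_convAnn hu g))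
      (convAnn_anti inf_le_right (hB.mul_left_mem_convAnn hv g))⟩

/-- A simple subcoalgebra contained in the wedge of two subcoalgebras is contained in
one of them. -/
theorem IsSimpleSubcoalgebra.le_or_le {D X Y : Submodule k H} (hD : IsSimpleSubcoalgebra k H D)
    (hX : IsSubcoalgebra k H X) (hY : IsSubcoalgebra k H Y)
    (h : ∀ f ∈ convAnn X, ∀ g ∈ convAnn Y, f * g ∈ convAnn D) : D ≤ X ∨ D ≤ Y := by
  have split : ∀ Z : Submodule k H, IsSubcoalgebra k H Z → ¬ D ≤ Z →
      (1 : WithConv (H →ₗ[k] k)) ∈ convAnn Z ⊔ convAnn D := by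
    intro Z hZ hDZ
    refine mem_convAnn_inf ?_
    have : Z ⊓ D = ⊥ := by
      by_contra hne
      exact hDZ (inf_eq_right.mp (hD.2.2 _ inf_le_right (hZ.inf hD.1) hne))
    rw [this]
    intro x hx
    simp_all
  by_contra! hcon
  obtain ⟨u, hu, v, hv, huv⟩ := Submodule.mem_sup.mp (split X hX hcon.1)
  obtain ⟨u', hu', v', hv', huv'⟩ := Submodule.mem_sup.mp (split Y hY hcon.2)
  refine hD.1.one_notMem_convAnn hD.2.1 ?_
  have : (1 : WithConv (H →ₗ[k] k)) = u * u' + u * v' + v * 1 := by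
    rw [← mul_add, huv', ← add_mul, huv, one_mul]
  rw [this]
  exact add_mem (add_mem (h u hu u' hu') (hD.1.mul_left_mem_convAnn hv' u))
    (hD.1.mul_right_mem_convAnn hv 1)

theorem exists_isSubcoalgebra_convAnn_eq (W : Submodule k (WithConv (H →ₗ[k] k)))
    (hW : ∀ f ∈ W, ∀ g, f * g ∈ W ∧ g * f ∈ W) :
    ∃ X : Submodule k H, IsSubcoalgebra k H X ∧ convAnn X = W := by
  let e := WithConv.linearEquiv k (H →ₗ[k] k)
  let V : Submodule k (Module.Dual k H) := W.map e.toLinearMap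
  have hV : convAnn V.dualCoannihilator = W := by
    ext f
    rw [mem_convAnn_iff, Subspace.dualCoannihilator_dualAnnihilator_eq]
    exact Submodule.mem_map_equiv (e := e) W
  exact ⟨V.dualCoannihilator, (isSubcoalgebra_iff_convAnn _).mpr (hV.symm ▸ hW), hV⟩

/-- A subcoalgebra which is neither zero nor simple is the wedge of two proper
subcoalgebras. -/
theorem IsSubcoalgebra.exists_wedge {A : Submodule k H} (hA : IsSubcoalgebra k H A)
    (hA0 : A ≠ ⊥) (hAs : ¬ IsSimpleSubcoalgebra k H A) :
    ∃ X Y : Submodule k H, IsSubcoalgebra k H X ∧ IsSubcoalgebra k H Y ∧ X < A ∧ Y < A ∧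
      ∀ f ∈ convAnn X, ∀ g ∈ convAnn Y, f * g ∈ convAnn A := by
  obtain ⟨E, hEA, hE, hE0, hne⟩ : ∃ E ≤ A, IsSubcoalgebra k H E ∧ E ≠ ⊥ ∧ E ≠ A := by
    by_contra! hcon
    exact hAs ⟨hA, hA0, fun E h1 h2 h3 => hcon E h1 h2 h3⟩
  let ideal (Z : Submodule k H) (hZ : IsSubcoalgebra k H Z) : Ideal (WithConv (H →ₗ[k] k)) :=
    { (convAnn Z).toAddSubmonoid with smul_mem' := fun g f hf => hZ.mul_left_mem_convAnn hf g }
  have htwo : ∀ Z hZ, (ideal Z hZ).IsTwoSided := fun Z hZ =>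
    ⟨fun g hf => hZ.mul_right_mem_convAnn hf g⟩
  have := htwo A hA
  have := htwo E hE
  have : Module.Finite k (WithConv (H →ₗ[k] k)) :=
    Module.Finite.equiv (WithConv.linearEquiv k (H →ₗ[k] k)).symm
  have : IsArtinianRing (WithConv (H →ₗ[k] k)) := IsArtinianRing.of_finite k _
  have hlt : ideal A hA < ideal E hE := by
    refine lt_of_le_of_ne (convAnn_anti hEA) fun heq => hne (le_antisymm hEA ?_)
    exact le_of_convAnn_le fun f hf => (heq ▸ hf : f ∈ ideal A hA)
  obtain ⟨a, b, ha, hb, hab⟩ := IsArtinianRing.exists_mul_mul_mem_of_lt_of_ne_top _ _ hlt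
    (fun h => hE.one_notMem_convAnn hE0 ((Ideal.eq_top_iff_one _).mp h))
  have gen : ∀ c : WithConv (H →ₗ[k] k), c ∉ convAnn A → ∃ X : Submodule k H,
      IsSubcoalgebra k H X ∧ X < A ∧
      convAnn X ≤ convAnn A ⊔ Submodule.span k {f | ∃ r s, f = r * c * s} := by
    intro c hc
    obtain ⟨X, hX, hXW⟩ := exists_isSubcoalgebra_convAnn_eq
      (Submodule.span k {f | ∃ r s, f = r * c * s}) (by
        intro f hf g
        induction hf using Submodule.span_induction with
        | mem f hf =>
          obtain ⟨r, s, rfl⟩ := hf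
          exact ⟨Submodule.subset_span ⟨r, s * g, by simp only [mul_assoc]⟩,
            Submodule.subset_span ⟨g * r, s, by simp only [mul_assoc]⟩⟩
        | zero => simp
        | add f f' _ _ hf hf' =>
          rw [add_mul, mul_add]
          exact ⟨add_mem hf.1 hf'.1, add_mem hf.2 hf'.2⟩
        | smul t f _ hf =>
          rw [smul_mul_assoc, mul_smul_comm]
          exact ⟨Submodule.smul_mem _ t hf.1, Submodule.smul_mem _ t hf.2⟩)
    refine ⟨A ⊓ X, hA.inf hX, lt_of_le_of_ne inf_le_left fun heq => hc ?_,
      fun f hf => hXW ▸ mem_convAnn_inf hf⟩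
    refine convAnn_anti (inf_eq_left.mp heq) (hXW ▸ Submodule.subset_span ⟨1, 1, by simp⟩)
  obtain ⟨X, hX, hXA, hXann⟩ := gen a ha
  obtain ⟨Y, hY, hYA, hYann⟩ := gen b hb
  refine ⟨X, Y, hX, hY, hXA, hYA, fun f hf g hg => ?_⟩
  obtain ⟨u, hu, v, hv, rfl⟩ := Submodule.mem_sup.mp (hXann hf)
  obtain ⟨u', hu', v', hv', rfl⟩ := Submodule.mem_sup.mp (hYann hg)
  rw [add_mul, mul_add v]
  refine add_mem (hA.mul_right_mem_convAnn hu _) (add_mem (hA.mul_left_mem_convAnn hu' _) ?_)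
  have hle : Submodule.span k {f | ∃ r s, f = r * a * s} *
      Submodule.span k {f | ∃ r s, f = r * b * s} ≤ convAnn A := by
    rw [Submodule.span_mul_span, Submodule.span_le]
    rintro _ ⟨_, ⟨r, s, rfl⟩, _, ⟨r', s', rfl⟩, rfl⟩
    have := hA.mul_right_mem_convAnn (hA.mul_left_mem_convAnn (hab (s * r')) r) s'
    simpa only [mul_assoc, SetLike.mem_coe] using this
  exact hle (Submodule.mul_mem_mul hv hv')

theorem IsSubcoalgebra.sup {A B : Submodule k H} (hA : IsSubcoalgebra k H A)
    (hB : IsSubcoalgebra k H B) : IsSubcoalgebra k H (A ⊔ B) := by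
  have hsup : ∀ f, f ∈ convAnn A → f ∈ convAnn B → f ∈ convAnn (A ⊔ B) := by
    intro f hfA hfB x hx
    obtain ⟨a, ha, b, hb, rfl⟩ := Submodule.mem_sup.mp hx
    rw [map_add, hfA a ha, hfB b hb, add_zero]
  rw [isSubcoalgebra_iff_convAnn]
  intro f hf g
  have hfA := convAnn_anti le_sup_left hf
  have hfB := convAnn_anti le_sup_right hf
  exact ⟨hsup _ (hA.mul_right_mem_convAnn hfA g) (hB.mul_right_mem_convAnn hfB g),
    hsup _ (hA.mul_left_mem_convAnn hfA g) (hB.mul_left_mem_convAnn hfB g)⟩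

theorem IsSimpleSubcoalgebra.exists_le_of_le_iSup {D : Submodule k H}
    (hD : IsSimpleSubcoalgebra k H D) {ι : Type*} (A : ι → Submodule k H)
    (hA : ∀ i, IsSubcoalgebra k H (A i)) (h : D ≤ ⨆ i, A i) : ∃ i, D ≤ A i := by
  classical
  have hcomp : IsCompactElement D := (Submodule.fg_iff_compact D).mp (IsNoetherian.noetherian D)
  obtain ⟨s, hs⟩ := CompleteLattice.IsCompactElement.exists_finset_of_le_iSup _ hcomp A h
  rw [← Finset.sup_eq_iSup] at hs
  have hsub : ∀ t : Finset ι, IsSubcoalgebra k H (t.sup A) := fun t =>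
    Finset.sup_induction (fun c hc => by simp_all) (fun _ ha _ hb => ha.sup hb)
      fun i _ => hA i
  clear h
  induction s using Finset.induction_on with
  | empty => exact absurd (le_bot_iff.mp hs) hD.2.1
  | insert i s _ ih =>
    rw [Finset.sup_insert] at hs
    refine (hD.le_or_le (hA i) (hsub s) fun f hf g hg => ?_).elim (fun h => ⟨i, h⟩) ih
    refine convAnn_anti hs fun x hx => ?_
    obtain ⟨a, ha, b, hb, rfl⟩ := Submodule.mem_sup.mp hx
    rw [map_add, (hA i).mul_right_mem_convAnn hf g a ha,
      (hsub s).mul_left_mem_convAnn hg f b hb, add_zero]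

theorem IsSubcoalgebra.exists_isSimpleSubcoalgebra_le {A : Submodule k H}
    (hA : IsSubcoalgebra k H A) (hA0 : A ≠ ⊥) : ∃ D ≤ A, IsSimpleSubcoalgebra k H D := by
  obtain ⟨D, ⟨hDA, hD, hD0⟩, hmin⟩ := wellFounded_lt.has_min
    {D : Submodule k H | D ≤ A ∧ IsSubcoalgebra k H D ∧ D ≠ ⊥} ⟨A, le_rfl, hA, hA0⟩
  refine ⟨D, hDA, hD, hD0, fun E hED hE hE0 => ?_⟩
  by_contra hne
  exact hmin E ⟨hED.trans hDA, hE, hE0⟩ (lt_of_le_of_ne hED hne)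

/-- A simple subcoalgebra of a product `A * B` of subcoalgebras is already contained in
`A' * B` for some simple subcoalgebra `A'` of `A`. -/
theorem IsSimpleSubcoalgebra.exists_le_mul {D B : Submodule k H}
    (hD : IsSimpleSubcoalgebra k H D) (hB : IsSubcoalgebra k H B) {A : Submodule k H}
    (hA : IsSubcoalgebra k H A) (h : D ≤ A * B) :
    ∃ A' ≤ A, IsSimpleSubcoalgebra k H A' ∧ D ≤ A' * B := by
  induction A using WellFoundedLT.induction with
  | ind A ih =>
    by_cases hAs : IsSimpleSubcoalgebra k H A
    · exact ⟨A, le_rfl, hAs, h⟩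
    have hA0 : A ≠ ⊥ := by
      rintro rfl
      rw [Submodule.bot_mul] at h
      exact hD.2.1 (le_bot_iff.mp h)
    obtain ⟨X, Y, hX, hY, hXA, hYA, hXY⟩ := hA.exists_wedge hA0 hAs
    rcases hD.le_or_le (hX.mul hB) (hY.mul hB) fun f hf g hg =>
      convAnn_anti h (convMul_mem_convAnn_mul hB hXY hf hg) with hDX | hDY
    · obtain ⟨A', hA', hs, hle⟩ := ih X hXA hX hDX
      exact ⟨A', hA'.trans hXA.le, hs, hle⟩
    · obtain ⟨A', hA', hs, hle⟩ := ih Y hYA hY hDY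
      exact ⟨A', hA'.trans hYA.le, hs, hle⟩

theorem IsSubcoalgebra.exists_counit_ne_zero {A : Submodule k H} (hA : IsSubcoalgebra k H A)
    (hA0 : A ≠ ⊥) : ∃ a ∈ A, Coalgebra.counit (R := k) a ≠ 0 := by
  by_contra! hcon
  exact hA.one_notMem_convAnn hA0 fun x hx => by simpa using hcon x hx

theorem IsSubcoalgebra.mul_ne_bot {A B : Submodule k H} (hA : IsSubcoalgebra k H A)
    (hB : IsSubcoalgebra k H B) (hA0 : A ≠ ⊥) (hB0 : B ≠ ⊥) : A * B ≠ ⊥ := by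
  obtain ⟨a, ha, ha0⟩ := hA.exists_counit_ne_zero hA0
  obtain ⟨b, hb, hb0⟩ := hB.exists_counit_ne_zero hB0
  intro hbot
  have hab : a * b ∈ A * B := Submodule.mul_mem_mul ha hb
  rw [hbot, Submodule.mem_bot] at hab
  have := congrArg (Coalgebra.counit (R := k)) hab
  rw [Bialgebra.counit_mul, map_zero] at this
  exact mul_ne_zero ha0 hb0 this

/-- Every simple subcoalgebra has a left dual. -/
theorem IsSimpleSubcoalgebra.exists_one_le_mul {C : Submodule k H}
    (hC : IsSimpleSubcoalgebra k H C) :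
    ∃ E : Submodule k H, IsSimpleSubcoalgebra k H E ∧ 1 ≤ E * C := by
  have hle : 1 ≤ (⊤ : Submodule k H) * C := by
    obtain ⟨c, hc, hc0⟩ := hC.1.exists_counit_ne_zero hC.2.1
    have hmem : LinearMap.mul' k H ((HopfAlgebra.antipode k).rTensor H
        (Coalgebra.comul (R := k) c)) ∈ (⊤ : Submodule k H) * C := by
      obtain ⟨t, ht⟩ := hC.1 c hc
      rw [← ht]
      clear ht
      induction t with
      | zero => simp
      | add x y hx hy => rw [map_add, map_add, map_add]; exact add_mem hx hy
      | tmul x y => simpa using Submodule.mul_mem_mul Submodule.mem_top y.2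
    rw [HopfAlgebra.mul_antipode_rTensor_comul_apply] at hmem
    rw [Submodule.one_le]
    simpa [Algebra.algebraMap_eq_smul_one, smul_smul, hc0] using
      Submodule.smul_mem _ (Coalgebra.counit (R := k) c)⁻¹ hmem
  obtain ⟨E, -, hE, h⟩ := isSimpleSubcoalgebra_one.exists_le_mul hC.1 isSubcoalgebra_top hle
  exact ⟨E, hE, h⟩

end Subcoalgebra

section Grading

variable {k H : Type} [Field k] [Ring H] [HopfAlgebra k H] {G : Type} [Group G]
  {deg : Submodule k H → G}

theorem IsGrading.deg_one (hdeg : IsGrading k H G deg) : deg 1 = 1 := by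
  have := hdeg 1 1 1 isSimpleSubcoalgebra_one isSimpleSubcoalgebra_one isSimpleSubcoalgebra_one
    (by rw [one_mul])
  simpa using this

theorem IsGrading.deg_eq_inv (hdeg : IsGrading k H G deg) {C E : Submodule k H}
    (hC : IsSimpleSubcoalgebra k H C) (hE : IsSimpleSubcoalgebra k H E) (h : 1 ≤ E * C) :
    deg E = (deg C)⁻¹ := by
  rw [eq_inv_iff_mul_eq_one, ← hdeg E C 1 hE hC isSimpleSubcoalgebra_one h, hdeg.deg_one]

theorem le_Hgr {S : Set G} {C : Submodule k H} (hC : IsSimpleSubcoalgebra k H C)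
    (hS : deg C ∈ S) : C ≤ Hgr k H G deg S :=
  le_sSup ⟨hC, hS⟩

variable [FiniteDimensional k H]

/-- The degrees of the simple subcoalgebras form a subgroup. -/
def IsGrading.support (hdeg : IsGrading k H G deg) : Subgroup G where
  carrier := {g | ∃ C, IsSimpleSubcoalgebra k H C ∧ deg C = g}
  one_mem' := ⟨1, isSimpleSubcoalgebra_one, hdeg.deg_one⟩
  mul_mem' := by
    rintro _ _ ⟨C, hC, rfl⟩ ⟨D, hD, rfl⟩
    obtain ⟨E, hle, hE⟩ := (hC.1.mul hD.1).exists_isSimpleSubcoalgebra_le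
      (hC.1.mul_ne_bot hD.1 hC.2.1 hD.2.1)
    exact ⟨E, hE, hdeg C D E hC hD hE hle⟩
  inv_mem' := by
    rintro _ ⟨C, hC, rfl⟩
    obtain ⟨E, hE, hle⟩ := hC.exists_one_le_mul
    exact ⟨E, hE, hdeg.deg_eq_inv hC hE hle⟩

/-- The universal grading is faithful: every degree is attained. -/
theorem IsUniversalGrading.exists_deg_eq (hdeg : IsUniversalGrading k H G deg) (g : G) :
    ∃ C, IsSimpleSubcoalgebra k H C ∧ deg C = g := by
  classical
  let deg' : Submodule k H → hdeg.1.support := fun C =>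
    if h : IsSimpleSubcoalgebra k H C then ⟨deg C, C, h, rfl⟩ else 1
  have hdeg'_coe : ∀ C, IsSimpleSubcoalgebra k H C → (deg' C : G) = deg C := fun C hC => by
    simp [deg', hC]
  have hdeg' : IsGrading k H hdeg.1.support deg' := fun C D E hC hD hE hle => by
    apply Subtype.ext
    rw [Subgroup.coe_mul, hdeg'_coe C hC, hdeg'_coe D hD, hdeg'_coe E hE,
      hdeg.1 C D E hC hD hE hle]
  obtain ⟨f, hf, -⟩ := hdeg.2 _ deg' hdeg'
  obtain ⟨_, _, huniq⟩ := hdeg.2 G deg hdeg.1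
  have hid : hdeg.1.support.subtype.comp f = MonoidHom.id G :=
    (huniq _ fun C hC => by simp [← hf C hC, hdeg'_coe C hC]).trans
      (huniq _ fun C _ => rfl).symm
  have hg : (f g : G) = g := DFunLike.congr_fun hid g
  exact hg ▸ (f g).2

theorem IsGrading.exists_deg_eq_of_le_mul (hdeg : IsGrading k H G deg) {Mg Ng : Subgroup G}
    {C D : Submodule k H} (hC : IsSimpleSubcoalgebra k H C) (hD : IsSimpleSubcoalgebra k H D)
    (hle : D ≤ Hgr k H G deg Mg * C * Hgr k H G deg Ng) :
    ∃ m ∈ Mg, ∃ n ∈ Ng, deg D = m * deg C * n := by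
  simp only [Hgr, sSup_eq_iSup', Submodule.iSup_mul, Submodule.mul_iSup] at hle
  rw [iSup_prod'] at hle
  obtain ⟨⟨⟨B, hB, hBn⟩, ⟨A, hA, hAm⟩⟩, hle⟩ := hD.exists_le_of_le_iSup _
    (fun x => (x.2.2.1.1.mul hC.1).mul x.1.2.1.1) hle
  obtain ⟨F, hFle, hF, hDF⟩ := hD.exists_le_mul hB.1 (hA.1.mul hC.1) hle
  exact ⟨deg A, hAm, deg B, hBn, by
    rw [hdeg F B D hF hB hD hDF, hdeg A C F hA hC hF hFle]⟩

/-- Simple subcoalgebras whose degrees differ by elements of `Mg` and `Ng` lie in the same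
double coset. -/
theorem IsUniversalGrading.le_mul_of_deg_eq (hdeg : IsUniversalGrading k H G deg)
    {Mg Ng : Subgroup G} {C D : Submodule k H} (hC : IsSimpleSubcoalgebra k H C)
    (hD : IsSimpleSubcoalgebra k H D) {m n : G} (hm : m ∈ Mg) (hn : n ∈ Ng)
    (hmn : deg D = m * deg C * n) : D ≤ Hgr k H G deg Mg * C * Hgr k H G deg Ng := by
  obtain ⟨B, hB, rfl⟩ := hdeg.exists_deg_eq n
  obtain ⟨B', hB', hBB⟩ := hB.exists_one_le_mul
  obtain ⟨E, hE, hEC⟩ := hC.exists_one_le_mul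
  have hle : D ≤ D * B' * E * C * B := by
    calc D = D * 1 := (mul_one D).symm
      _ ≤ D * (B' * B) := by gcongr
      _ = D * (B' * 1 * B) := by rw [mul_one]
      _ ≤ D * (B' * (E * C) * B) := by gcongr
      _ = D * B' * E * C * B := by simp only [mul_assoc]
  have hDB := hD.1.mul hB'.1
  obtain ⟨F₁, hF₁le, hF₁, hDF₁⟩ := hD.exists_le_mul hB.1 ((hDB.mul hE.1).mul hC.1) hle
  obtain ⟨F₂, hF₂le, hF₂, hF₁F₂⟩ := hF₁.exists_le_mul hC.1 (hDB.mul hE.1) hF₁le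
  obtain ⟨F₃, hF₃le, hF₃, hF₂F₃⟩ := hF₂.exists_le_mul hE.1 hDB hF₂le
  have hdegF₂ : deg F₂ = m := by
    rw [hdeg.1 F₃ E F₂ hF₃ hE hF₂ hF₂F₃, hdeg.1 D B' F₃ hD hB' hF₃ hF₃le,
      hdeg.1.deg_eq_inv hB hB' hBB, hdeg.1.deg_eq_inv hC hE hEC, hmn]
    group
  calc D ≤ F₁ * B := hDF₁
    _ ≤ F₂ * C * B := by gcongr
    _ ≤ _ := by
      gcongr
      · exact le_Hgr hF₂ (hdegF₂ ▸ hm)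
      · exact le_Hgr hB hn

end Grading

noncomputable section

variable (k : Type) [Field k] [CharZero k] [IsAlgClosed k]
variable (H : Type) [Ring H] [HopfAlgebra k H]

section Statements

variable [FiniteDimensional k H] [IsSemisimpleRing H]

/-- Proposition 56: let `G` be the universal grading group of
`Rep(H^*)`.  For subgroups `M, N ≤ G`, the assignment
`H(M)·C·H(N) ↦ M·deg(C)·N` is a well-defined bijection from the set of double
cosets `H(M)\H/H(N)` onto the set of group double cosets `M\G/N`.
(Well-definedness and injectivity are the displayed equivalence; the last
clause is surjectivity.) -/
theorem statement_15 (G : Type) [Group G] [Finite G]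
    (deg : Submodule k H → G) (hdeg : IsUniversalGrading k H G deg)
    (Mg Ng : Subgroup G) (LM LN : Subalgebra k H)
    (hLM : LM.toSubmodule = Hgr k H G deg ↑Mg)
    (hLN : LN.toSubmodule = Hgr k H G deg ↑Ng) :
    (∀ C D : Submodule k H, IsSimpleSubcoalgebra k H C →
      IsSimpleSubcoalgebra k H D →
      (LM.toSubmodule * C * LN.toSubmodule = LM.toSubmodule * D * LN.toSubmodule ↔
        ∃ m ∈ Mg, ∃ n ∈ Ng, deg D = m * deg C * n)) ∧
    (∀ g : G, ∃ C : Submodule k H, IsSimpleSubcoalgebra k H C ∧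
      ∃ m ∈ Mg, ∃ n ∈ Ng, deg C = m * g * n) := by
  have hle : ∀ C D : Submodule k H, IsSimpleSubcoalgebra k H C → IsSimpleSubcoalgebra k H D →
      (∃ m ∈ Mg, ∃ n ∈ Ng, deg D = m * deg C * n) →
      LM.toSubmodule * D * LN.toSubmodule ≤ LM.toSubmodule * C * LN.toSubmodule := by
    rintro C D hC hD ⟨m, hm, n, hn, hmn⟩
    have h : D ≤ LM.toSubmodule * C * LN.toSubmodule := by
      rw [hLM, hLN]
      exact hdeg.le_mul_of_deg_eq hC hD hm hn hmn
    calc LM.toSubmodule * D * LN.toSubmodule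
        ≤ LM.toSubmodule * (LM.toSubmodule * C * LN.toSubmodule) * LN.toSubmodule := by gcongr
      _ = LM.toSubmodule * LM.toSubmodule * C * (LN.toSubmodule * LN.toSubmodule) := by
        simp only [mul_assoc]
      _ = LM.toSubmodule * C * LN.toSubmodule := by
        rw [LM.isIdempotentElem_toSubmodule.eq, LN.isIdempotentElem_toSubmodule.eq]
  refine ⟨fun C D hC hD => ⟨fun h => ?_, fun h => le_antisymm ?_ (hle C D hC hD h)⟩, fun g => ?_⟩
  · refine hdeg.1.exists_deg_eq_of_le_mul hC hD ?_
    rw [← hLM, ← hLN, h]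
    calc D = 1 * D * 1 := by rw [one_mul, mul_one]
      _ ≤ _ := by
        gcongr
        · exact Submodule.one_le.mpr LM.one_mem
        · exact Submodule.one_le.mpr LN.one_mem
  · obtain ⟨m, hm, n, hn, hmn⟩ := h
    exact hle D C hD hC ⟨m⁻¹, inv_mem hm, n⁻¹, inv_mem hn, by rw [hmn]; group⟩
  · obtain ⟨C, hC, hCg⟩ := hdeg.exists_deg_eq g
    exact ⟨C, hC, 1, one_mem _, 1, one_mem _, by simpa using hCg⟩

end Statements

end

end MackeyPaper
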